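/- The split-statistic universal confidence set is finite-sample valid: for every n ∈ ℕ and every significance level a ∈ (0,1), Pr_{θ*}(θ* ∈ C_n^a) ≥ 1 − a, where C_n^a = {θ ∈ Θ : U_{α,β,n}^0(θ) ≤ 1/a}. -/

import Mathlib

open MeasureTheory ENNReal
open scoped BigOperators Classical

noncomputable section

/-- Division in `ℝ≥0∞` with the convention that the ratio is `0` when the
denominator is `0`. -/
def safeDiv (a b : ℝ≥0∞) : ℝ≥0∞ := if b = 0 then 0 else a / b

variable {d : ℕ} {π : Fin d → Type*} [∀ i, MeasurableSpace (π i)]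

/-- The marginal density on the coordinates in `S`, obtained by integrating a density
out over the coordinates in `[d] \ S` (as a function of the full vector, depending only
on the coordinates in `S`). -/
def marginal (μ : ∀ i, Measure (π i)) (S : Finset (Fin d))
    (f : (∀ i, π i) → ℝ≥0∞) : (∀ i, π i) → ℝ≥0∞ :=
  MeasureTheory.lmarginal μ Sᶜ f

/-- The conditional density of the coordinates in `T1` given the coordinates in `T2`,
with the convention that the ratio is `0` when the denominator is `0`. -/
def condDens (μ : ∀ i, Measure (π i)) (T1 T2 : Finset (Fin d))
    (f : (∀ i, π i) → ℝ≥0∞) (x : ∀ i, π i) : ℝ≥0∞ :=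
  safeDiv (marginal μ (T1 ∪ T2) f x) (marginal μ T2 f x)

/-- `𝕊_d`: the nonempty subsets of `[d]`. -/
abbrev Sd (d : ℕ) := {S : Finset (Fin d) // S.Nonempty}

/-- `𝕋_d`: ordered pairs of disjoint nonempty subsets of `[d]`. -/
abbrev Td (d : ℕ) := {T : Finset (Fin d) × Finset (Fin d) //
  T.1.Nonempty ∧ T.2.Nonempty ∧ Disjoint T.1 T.2}

/-- The individual composite likelihood
`p_{α,β}(x;θ) = ∏_S p_S(x_S;θ)^(α_S/γ) ∏_T p(x_{T←}|x_{T→};θ)^(β_T/γ)`,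
where `f = p(·;θ)` is the joint density. -/
def compLik (μ : ∀ i, Measure (π i)) (α : Sd d → ℝ) (β : Td d → ℝ) (γ : ℝ)
    (f : (∀ i, π i) → ℝ≥0∞) (x : ∀ i, π i) : ℝ≥0∞ :=
  (∏ S : Sd d, marginal μ S.1 f x ^ (α S / γ)) *
  (∏ T : Td d, condDens μ T.1.1 T.1.2 f x ^ (β T / γ))

/-!
The likelihood ratio of each marginal or conditional density has expectation at most one under
`p(·;θ*)`. The composite ratio is a weighted geometric mean of these, with weights `α_S / γ` and
`β_T / γ` summing to one, so by Hölder's inequality its expectation is at most one as well. Given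
the training half of the sample, the split statistic is a product of independent copies of such
ratios; its expectation is therefore at most one and Markov's inequality concludes.
-/

open ProbabilityTheory

section SafeDiv

lemma safeDiv_top_right (a : ℝ≥0∞) : safeDiv a ∞ = 0 := by simp [safeDiv]

lemma safeDiv_mul_le (a b : ℝ≥0∞) : safeDiv a b * b ≤ a := by
  unfold safeDiv
  split_ifs
  · simp
  · exact (mul_comm _ _).trans_le ENNReal.mul_div_le

lemma safeDiv_one_mul (a b : ℝ≥0∞) : safeDiv 1 b * a = safeDiv a b := by
  unfold safeDiv
  split_ifs
  · rw [zero_mul]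
  · rw [one_div, mul_comm, div_eq_mul_inv]

lemma safeDiv_mul_mul_le (a a' b b' : ℝ≥0∞) :
    safeDiv (a * a') (b * b') ≤ safeDiv a b * safeDiv a' b' := by
  by_cases hbb' : b * b' = 0
  · simp [safeDiv, hbb']
  have hb : b ≠ 0 := left_ne_zero_of_mul hbb'
  have hb' : b' ≠ 0 := right_ne_zero_of_mul hbb'
  obtain rfl | hb_top := eq_or_ne b ∞
  · simp [ENNReal.top_mul hb', safeDiv_top_right]
  simp only [safeDiv, hb, hb', hbb', if_false]
  rw [ENNReal.mul_div_mul_comm (Or.inl hb) (Or.inl hb_top)]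

lemma safeDiv_prod_le {ι : Type*} (s : Finset ι) (a b : ι → ℝ≥0∞) :
    safeDiv (∏ i ∈ s, a i) (∏ i ∈ s, b i) ≤ ∏ i ∈ s, safeDiv (a i) (b i) := by
  induction s using Finset.cons_induction with
  | empty => simp [safeDiv]
  | cons i s hi ih =>
    simp only [Finset.prod_cons]
    exact (safeDiv_mul_mul_le _ _ _ _).trans (by gcongr)

lemma safeDiv_rpow_le (a b : ℝ≥0∞) {w : ℝ} (hw : 0 ≤ w) :
    safeDiv (a ^ w) (b ^ w) ≤ safeDiv a b ^ w := by
  obtain rfl | hw_pos := hw.eq_or_lt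
  · simp [safeDiv]
  obtain rfl | hb := eq_or_ne b 0
  · simp [safeDiv, hw_pos]
  have hbw : b ^ w ≠ 0 := by simp [ENNReal.rpow_eq_zero_iff, hb, hw]
  simp only [safeDiv, hb, hbw, if_false]
  rw [ENNReal.div_rpow_of_nonneg _ _ hw]

lemma safeDiv_safeDiv_mul_le (r b c : ℝ≥0∞) : safeDiv r (safeDiv b c) * b ≤ r * c := by
  obtain rfl | hc := eq_or_ne c 0
  · simp [safeDiv]
  obtain rfl | hc_top := eq_or_ne c ∞
  · simp [safeDiv]
  have hb : safeDiv b c * c = b := by simp [safeDiv, hc, ENNReal.div_mul_cancel hc hc_top]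
  calc safeDiv r (safeDiv b c) * b
      = safeDiv r (safeDiv b c) * safeDiv b c * c := by rw [mul_assoc, hb]
    _ ≤ r * c := by gcongr; exact safeDiv_mul_le _ _

lemma measurable_safeDiv {X : Type*} [MeasurableSpace X] {f g : X → ℝ≥0∞}
    (hf : Measurable f) (hg : Measurable g) : Measurable fun x => safeDiv (f x) (g x) :=
  Measurable.ite (hg (measurableSet_singleton 0)) measurable_const (hf.div hg)

lemma dependsOn_safeDiv {ι : Type*} {X : ι → Type*} {f g : (∀ i, X i) → ℝ≥0∞} {s : Set ι}
    (hf : DependsOn f s) (hg : DependsOn g s) : DependsOn (fun x => safeDiv (f x) (g x)) s :=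
  fun _ _ hxy => congrArg₂ safeDiv (hf hxy) (hg hxy)

lemma lintegral_safeDiv_prod_rpow_le_one {X ι : Type*} [MeasurableSpace X] {ν : Measure X}
    [Fintype ι] {f g : ι → X → ℝ≥0∞} (hf : ∀ i, Measurable (f i)) (hg : ∀ i, Measurable (g i))
    {w : ι → ℝ} (hw : ∀ i, 0 ≤ w i) (hw_sum : ∑ i, w i = 1)
    (hfg : ∀ i, ∫⁻ x, safeDiv (f i x) (g i x) ∂ν ≤ 1) :
    ∫⁻ x, safeDiv (∏ i, f i x ^ w i) (∏ i, g i x ^ w i) ∂ν ≤ 1 :=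
  calc ∫⁻ x, safeDiv (∏ i, f i x ^ w i) (∏ i, g i x ^ w i) ∂ν
      ≤ ∫⁻ x, ∏ i, safeDiv (f i x) (g i x) ^ w i ∂ν :=
        lintegral_mono fun _ => (safeDiv_prod_le _ _ _).trans
          (Finset.prod_le_prod' fun i _ => safeDiv_rpow_le _ _ (hw i))
    _ ≤ ∏ i, (∫⁻ x, safeDiv (f i x) (g i x) ∂ν) ^ w i :=
        ENNReal.lintegral_prod_norm_pow_le _
          (fun i _ => (measurable_safeDiv (hf i) (hg i)).aemeasurable) hw_sum fun i _ => hw i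
    _ ≤ 1 := Finset.prod_le_one' fun i _ => ENNReal.rpow_le_one (hfg i) (hw i)

end SafeDiv

section IteratedIntegral

variable {δ : Type*} [DecidableEq δ] {X : δ → Type*} [∀ i, MeasurableSpace (X i)]
  (μ : ∀ i, Measure (X i))

lemma lmarginal_mul_left_of_dependsOn {s t : Finset δ} (hst : Disjoint s t)
    {F g : (∀ i, X i) → ℝ≥0∞} (hF : DependsOn F t) (hg : Measurable g) :
    lmarginal μ s (fun x => F x * g x) = fun x => F x * lmarginal μ s g x := by
  funext x
  have hF_update (y : ∀ i : s, X i) : F (Function.updateFinset x s y) = F x :=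
    hF fun i hi => by simp [Function.updateFinset, Finset.disjoint_right.1 hst hi]
  simp only [lmarginal, hF_update]
  exact lintegral_const_mul _ (hg.comp measurable_updateFinset)

lemma measurable_lmarginal_uncurry [∀ i, SigmaFinite (μ i)] {Θ : Type*} [MeasurableSpace Θ]
    {p : Θ → (∀ i, X i) → ℝ≥0∞} (hp : Measurable (Function.uncurry p)) (s : Finset δ) :
    Measurable fun z : Θ × (∀ i, X i) => lmarginal μ s (p z.1) z.2 := by
  have h_update : Measurable fun q : (Θ × (∀ i, X i)) × (∀ i : s, X i) =>
      (q.1.1, Function.updateFinset q.1.2 s q.2) :=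
    (measurable_fst.comp measurable_fst).prodMk
      (measurable_updateFinset'.comp ((measurable_snd.comp measurable_fst).prodMk measurable_snd))
  exact (hp.comp h_update).lintegral_prod_right'

end IteratedIntegral

section CompositeLikelihood

variable (μ : ∀ i, Measure (π i))

lemma dependsOn_marginal (S : Finset (Fin d)) (f : (∀ i, π i) → ℝ≥0∞) :
    DependsOn (marginal μ S f) S :=
  fun _ _ hxy => lmarginal_congr μ f fun i hi => hxy i (by simpa using hi)

lemma dependsOn_condDens (C D : Finset (Fin d)) (f : (∀ i, π i) → ℝ≥0∞) :
    DependsOn (condDens μ C D f) ↑(C ∪ D) :=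
  dependsOn_safeDiv (dependsOn_marginal μ _ f)
    ((dependsOn_marginal μ D f).mono (by simp))

lemma marginal_mul_left_of_dependsOn {S : Finset (Fin d)} {F g : (∀ i, π i) → ℝ≥0∞}
    (hF : DependsOn F S) (hg : Measurable g) :
    marginal μ S (fun x => F x * g x) = fun x => F x * marginal μ S g x :=
  lmarginal_mul_left_of_dependsOn μ disjoint_compl_left hF hg

/-- The individual factors of the composite likelihood, marginal and conditional densities
together in one family so that Hölder's inequality applies to all of them at once. -/
def compLikFactor (f : (∀ i, π i) → ℝ≥0∞) : Sd d ⊕ Td d → (∀ i, π i) → ℝ≥0∞ :=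
  Sum.elim (fun S => marginal μ S.1 f) (fun T => condDens μ T.1.1 T.1.2 f)

lemma compLik_eq_prod_compLikFactor (α : Sd d → ℝ) (β : Td d → ℝ) (γ : ℝ)
    (f : (∀ i, π i) → ℝ≥0∞) (x : ∀ i, π i) :
    compLik μ α β γ f x = ∏ i, compLikFactor μ f i x ^ (Sum.elim α β i / γ) :=
  (Fintype.prod_sum_type fun i => compLikFactor μ f i x ^ (Sum.elim α β i / γ)).symm

variable [∀ i, SigmaFinite (μ i)]

lemma measurable_marginal (S : Finset (Fin d)) {f : (∀ i, π i) → ℝ≥0∞} (hf : Measurable f) :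
    Measurable (marginal μ S f) :=
  hf.lmarginal μ

lemma measurable_condDens (C D : Finset (Fin d)) {f : (∀ i, π i) → ℝ≥0∞} (hf : Measurable f) :
    Measurable (condDens μ C D f) :=
  measurable_safeDiv (measurable_marginal μ _ hf) (measurable_marginal μ _ hf)

lemma measurable_compLikFactor {f : (∀ i, π i) → ℝ≥0∞} (hf : Measurable f) (i : Sd d ⊕ Td d) :
    Measurable (compLikFactor μ f i) := by
  rcases i with S | T
  · exact measurable_marginal μ _ hf
  · exact measurable_condDens μ _ _ hf

lemma measurable_compLik_uncurry {Θ : Type*} [MeasurableSpace Θ] {p : Θ → (∀ i, π i) → ℝ≥0∞}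
    (hp : Measurable (Function.uncurry p)) (α : Sd d → ℝ) (β : Td d → ℝ) (γ : ℝ) :
    Measurable fun z : Θ × (∀ i, π i) => compLik μ α β γ (p z.1) z.2 := by
  have h_marginal (S : Finset (Fin d)) :
      Measurable fun z : Θ × (∀ i, π i) => marginal μ S (p z.1) z.2 :=
    measurable_lmarginal_uncurry μ hp Sᶜ
  exact (Finset.measurable_fun_prod _ fun S _ => (h_marginal _).pow_const _).mul
    (Finset.measurable_fun_prod _ fun T _ =>
      (measurable_safeDiv (h_marginal _) (h_marginal _)).pow_const _)

lemma lmarginal_marginal_union {C D : Finset (Fin d)} (hCD : Disjoint C D)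
    {f : (∀ i, π i) → ℝ≥0∞} (hf : Measurable f) :
    lmarginal μ C (marginal μ (C ∪ D) f) = marginal μ D f := by
  have h_compl : Dᶜ = C ∪ (C ∪ D)ᶜ := by
    rw [Finset.compl_union, Finset.union_inter_distrib_left, Finset.union_compl,
      Finset.univ_inter, Finset.union_eq_right.2 hCD.le_compl_right]
  have h_disj : Disjoint C (C ∪ D)ᶜ :=
    disjoint_compl_right.mono_left Finset.subset_union_left
  rw [marginal, marginal, h_compl, lmarginal_union μ f hf h_disj]

lemma lmarginal_condDens_le_one {C D : Finset (Fin d)} (hCD : Disjoint C D)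
    {f : (∀ i, π i) → ℝ≥0∞} (hf : Measurable f) :
    lmarginal μ C (condDens μ C D f) ≤ 1 := by
  have h_inv : DependsOn (fun x => safeDiv 1 (marginal μ D f x)) D :=
    dependsOn_safeDiv (fun _ _ _ => rfl) (dependsOn_marginal μ D f)
  calc lmarginal μ C (condDens μ C D f)
      = lmarginal μ C fun x => safeDiv 1 (marginal μ D f x) * marginal μ (C ∪ D) f x := by
        simp only [safeDiv_one_mul]; rfl
    _ = fun x => safeDiv 1 (marginal μ D f x) * marginal μ D f x := by
        rw [lmarginal_mul_left_of_dependsOn μ hCD h_inv (measurable_marginal μ _ hf),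
          lmarginal_marginal_union μ hCD hf]
    _ ≤ 1 := fun x => safeDiv_mul_le _ _

lemma lintegral_safeDiv_marginal_mul_le (S : Finset (Fin d)) {f g : (∀ i, π i) → ℝ≥0∞}
    (hf : Measurable f) (hg : Measurable g) :
    ∫⁻ x, safeDiv (marginal μ S f x) (marginal μ S g x) * g x ∂(Measure.pi μ)
      ≤ ∫⁻ x, f x ∂(Measure.pi μ) := by
  have h_ratio : Measurable fun x => safeDiv (marginal μ S f x) (marginal μ S g x) :=
    measurable_safeDiv (measurable_marginal μ S hf) (measurable_marginal μ S hg)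
  refine lintegral_le_of_lmarginal_le Sᶜ (h_ratio.mul hg) hf ?_
  calc marginal μ S (fun x => safeDiv (marginal μ S f x) (marginal μ S g x) * g x)
      = fun x => safeDiv (marginal μ S f x) (marginal μ S g x) * marginal μ S g x :=
        marginal_mul_left_of_dependsOn μ
          (dependsOn_safeDiv (dependsOn_marginal μ S f) (dependsOn_marginal μ S g)) hg
    _ ≤ marginal μ S f := fun x => safeDiv_mul_le _ _

lemma marginal_safeDiv_condDens_mul_le {C D : Finset (Fin d)} (hCD : Disjoint C D)
    {f g : (∀ i, π i) → ℝ≥0∞} (hf : Measurable f) (hg : Measurable g) :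
    marginal μ D (fun x => safeDiv (condDens μ C D f x) (condDens μ C D g x) * g x)
      ≤ marginal μ D g := by
  have h_ratio : Measurable fun x => safeDiv (condDens μ C D f x) (condDens μ C D g x) :=
    measurable_safeDiv (measurable_condDens μ C D hf) (measurable_condDens μ C D hg)
  calc marginal μ D (fun x => safeDiv (condDens μ C D f x) (condDens μ C D g x) * g x)
      = lmarginal μ C (marginal μ (C ∪ D)
          fun x => safeDiv (condDens μ C D f x) (condDens μ C D g x) * g x) :=
        (lmarginal_marginal_union μ hCD (h_ratio.mul hg)).symm
    _ = lmarginal μ C fun x =>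
          safeDiv (condDens μ C D f x) (condDens μ C D g x) * marginal μ (C ∪ D) g x := by
        rw [marginal_mul_left_of_dependsOn μ
          (dependsOn_safeDiv (dependsOn_condDens μ C D f) (dependsOn_condDens μ C D g)) hg]
    _ ≤ lmarginal μ C fun x => marginal μ D g x * condDens μ C D f x :=
        lmarginal_mono fun x => (safeDiv_safeDiv_mul_le _ _ _).trans_eq (mul_comm _ _)
    _ = fun x => marginal μ D g x * lmarginal μ C (condDens μ C D f) x :=
        lmarginal_mul_left_of_dependsOn μ hCD (dependsOn_marginal μ D g)
          (measurable_condDens μ C D hf)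
    _ ≤ marginal μ D g := fun x => mul_le_of_le_one_right' (lmarginal_condDens_le_one μ hCD hf x)

lemma lintegral_safeDiv_condDens_mul_le {C D : Finset (Fin d)} (hCD : Disjoint C D)
    {f g : (∀ i, π i) → ℝ≥0∞} (hf : Measurable f) (hg : Measurable g) :
    ∫⁻ x, safeDiv (condDens μ C D f x) (condDens μ C D g x) * g x ∂(Measure.pi μ)
      ≤ ∫⁻ x, g x ∂(Measure.pi μ) :=
  lintegral_le_of_lmarginal_le Dᶜ
    ((measurable_safeDiv (measurable_condDens μ C D hf) (measurable_condDens μ C D hg)).mul hg) hg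
    (marginal_safeDiv_condDens_mul_le μ hCD hf hg)

variable {f g : (∀ i, π i) → ℝ≥0∞}

lemma lintegral_safeDiv_compLikFactor_le_one (hf : Measurable f) (hg : Measurable g)
    (hf_le : ∫⁻ x, f x ∂(Measure.pi μ) ≤ 1) (hg_le : ∫⁻ x, g x ∂(Measure.pi μ) ≤ 1)
    (i : Sd d ⊕ Td d) :
    ∫⁻ x, safeDiv (compLikFactor μ f i x) (compLikFactor μ g i x)
      ∂((Measure.pi μ).withDensity g) ≤ 1 := by
  rw [lintegral_withDensity_eq_lintegral_mul _ hg
    (measurable_safeDiv (measurable_compLikFactor μ hf i) (measurable_compLikFactor μ hg i))]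
  simp only [Pi.mul_apply, mul_comm (g _)]
  rcases i with S | T
  · exact (lintegral_safeDiv_marginal_mul_le μ S.1 hf hg).trans hf_le
  · exact (lintegral_safeDiv_condDens_mul_le μ T.2.2.2 hf hg).trans hg_le

lemma lintegral_safeDiv_compLik_le_one {α : Sd d → ℝ} {β : Td d → ℝ}
    (hα : ∀ S, 0 ≤ α S) (hβ : ∀ T, 0 ≤ β T)
    {γ : ℝ} (hγ : γ = ∑ S, α S + ∑ T, β T) (hγpos : 0 < γ)
    (hf : Measurable f) (hg : Measurable g)
    (hf_le : ∫⁻ x, f x ∂(Measure.pi μ) ≤ 1) (hg_le : ∫⁻ x, g x ∂(Measure.pi μ) ≤ 1) :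
    ∫⁻ x, safeDiv (compLik μ α β γ f x) (compLik μ α β γ g x)
      ∂((Measure.pi μ).withDensity g) ≤ 1 := by
  have hw (i : Sd d ⊕ Td d) : 0 ≤ Sum.elim α β i / γ :=
    div_nonneg (Sum.rec hα hβ i) hγpos.le
  have hw_sum : ∑ i, Sum.elim α β i / γ = 1 := by
    rw [← Finset.sum_div, Fintype.sum_sum_type]
    exact (div_eq_one_iff_eq hγpos.ne').2 hγ.symm
  simp only [compLik_eq_prod_compLikFactor]
  exact lintegral_safeDiv_prod_rpow_le_one (measurable_compLikFactor μ hf)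
    (measurable_compLikFactor μ hg) hw hw_sum
    (lintegral_safeDiv_compLikFactor_le_one μ hf hg hf_le hg_le)

end CompositeLikelihood

section SplitSample

lemma one_sub_le_measure_le_inv_of_lintegral_le_one {Ω : Type*} [MeasurableSpace Ω]
    {P : Measure Ω} [IsProbabilityMeasure P] {U : Ω → ℝ≥0∞} (hU : AEMeasurable U P)
    (hU_le : ∫⁻ ω, U ω ∂P ≤ 1) (a : ℝ≥0∞) :
    1 - a ≤ P {ω | U ω ≤ a⁻¹} := by
  have h_markov : P {ω | a⁻¹ ≤ U ω} ≤ a := by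
    rw [← inv_inv a, ENNReal.le_inv_iff_mul_le, inv_inv, mul_comm]
    exact (mul_meas_ge_le_lintegral₀ hU a⁻¹).trans hU_le
  have h_cover : (Set.univ : Set Ω) ⊆ {ω | U ω ≤ a⁻¹} ∪ {ω | a⁻¹ ≤ U ω} :=
    fun ω _ => le_total (U ω) a⁻¹
  rw [tsub_le_iff_right]
  calc 1 = P Set.univ := measure_univ.symm
    _ ≤ P {ω | U ω ≤ a⁻¹} + P {ω | a⁻¹ ≤ U ω} := (measure_mono h_cover).trans (measure_union_le _ _)
    _ ≤ P {ω | U ω ≤ a⁻¹} + a := by gcongr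

lemma isProbabilityMeasure_withDensity_of_lintegral_eq_one {E : Type*} [MeasurableSpace E]
    {κ : Measure E} {f : E → ℝ≥0∞} (hf : ∫⁻ x, f x ∂κ = 1) :
    IsProbabilityMeasure (κ.withDensity f) :=
  ⟨by rw [withDensity_apply _ MeasurableSet.univ, Measure.restrict_univ, hf]⟩

lemma lintegral_pi_prod_eq_prod_lintegral {ι : Type*} [Fintype ι] {E : ι → Type*}
    [∀ i, MeasurableSpace (E i)] (ν : ∀ i, Measure (E i)) [∀ i, IsProbabilityMeasure (ν i)]
    {h : ∀ i, E i → ℝ≥0∞} (hh : ∀ i, Measurable (h i)) :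
    ∫⁻ x, ∏ i, h i (x i) ∂(Measure.pi ν) = ∏ i, ∫⁻ x, h i x ∂(ν i) := by
  rw [lintegral_prod_eq_prod_lintegral_of_indepFun _ _
    (iIndepFun_pi fun i => (hh i).aemeasurable) fun i => (hh i).comp (measurable_pi_apply i)]
  exact Finset.prod_congr rfl fun i _ => (measurePreserving_eval ν i).lintegral_comp (hh i)

variable {ι E 𝓨 : Type*} [Fintype ι] [MeasurableSpace E] [MeasurableSpace 𝓨]
  {ν : Measure E} [IsProbabilityMeasure ν] {ρ : Measure 𝓨} [IsProbabilityMeasure ρ]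

lemma lintegral_prod_pi_prod_le_one {h : 𝓨 → E → ℝ≥0∞} (hh : Measurable (Function.uncurry h))
    (hh_le : ∀ y, ∫⁻ x, h y x ∂ν ≤ 1) :
    ∫⁻ z : (ι → E) × 𝓨, ∏ j, h z.2 (z.1 j) ∂((Measure.pi fun _ => ν).prod ρ) ≤ 1 := by
  have h_meas : Measurable fun z : (ι → E) × 𝓨 => ∏ j, h z.2 (z.1 j) :=
    Finset.measurable_fun_prod _ fun j _ =>
      hh.comp (measurable_snd.prodMk ((measurable_pi_apply j).comp measurable_fst))
  have h_section (y : 𝓨) : ∫⁻ x : ι → E, ∏ j, h y (x j) ∂(Measure.pi fun _ => ν) ≤ 1 := by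
    rw [lintegral_pi_prod_eq_prod_lintegral _ fun _ => hh.of_uncurry_left]
    exact Finset.prod_le_one' fun _ _ => hh_le y
  rw [lintegral_prod_symm' _ h_meas]
  simpa using lintegral_mono (μ := ρ) h_section

lemma one_sub_le_measure_safeDiv_prod_le_inv {Ω : Type*} [MeasurableSpace Ω] {P : Measure Ω}
    {X : ι → Ω → E} {Y : Ω → 𝓨}
    (hXY : HasLaw (fun ω => (fun j => X j ω, Y ω)) ((Measure.pi fun _ => ν).prod ρ) P)
    {c : 𝓨 → E → ℝ≥0∞} {c₀ : E → ℝ≥0∞} (hc : Measurable (Function.uncurry c))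
    (hc₀ : Measurable c₀) (h_ratio : ∀ y, ∫⁻ x, safeDiv (c y x) (c₀ x) ∂ν ≤ 1) (a : ℝ≥0∞) :
    1 - a ≤ P {ω | safeDiv (∏ j, c (Y ω) (X j ω)) (∏ j, c₀ (X j ω)) ≤ a⁻¹} := by
  have : IsProbabilityMeasure P := hXY.isProbabilityMeasure
  have h_meas : Measurable fun z : (ι → E) × 𝓨 =>
      safeDiv (∏ j, c z.2 (z.1 j)) (∏ j, c₀ (z.1 j)) := by
    refine measurable_safeDiv ?_ ?_ <;> refine Finset.measurable_fun_prod _ fun j _ => ?_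
    · exact hc.comp (measurable_snd.prodMk ((measurable_pi_apply j).comp measurable_fst))
    · exact hc₀.comp ((measurable_pi_apply j).comp measurable_fst)
  refine one_sub_le_measure_le_inv_of_lintegral_le_one
    (h_meas.comp_aemeasurable hXY.aemeasurable) ?_ a
  calc ∫⁻ ω, safeDiv (∏ j, c (Y ω) (X j ω)) (∏ j, c₀ (X j ω)) ∂P
      = ∫⁻ z : (ι → E) × 𝓨, safeDiv (∏ j, c z.2 (z.1 j)) (∏ j, c₀ (z.1 j))
          ∂((Measure.pi fun _ => ν).prod ρ) := hXY.lintegral_comp h_meas.aemeasurable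
    _ ≤ ∫⁻ z : (ι → E) × 𝓨, ∏ j, safeDiv (c z.2 (z.1 j)) (c₀ (z.1 j))
          ∂((Measure.pi fun _ => ν).prod ρ) := lintegral_mono fun z => safeDiv_prod_le _ _ _
    _ ≤ 1 := lintegral_prod_pi_prod_le_one (h := fun y x => safeDiv (c y x) (c₀ x))
        (measurable_safeDiv hc (hc₀.comp measurable_snd)) h_ratio

end SplitSample

theorem split_confidence_set_valid_general
    {d : ℕ} {π : Fin d → Type*} [∀ i, MeasurableSpace (π i)]
    (μ : ∀ i, Measure (π i)) [∀ i, SigmaFinite (μ i)]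
    {Θ : Type*} [MeasurableSpace Θ] {p : Θ → (∀ i, π i) → ℝ≥0∞}
    (hp_meas : Measurable (Function.uncurry p))
    (hp_prob : ∀ θ : Θ, ∫⁻ x, p θ x ∂(Measure.pi μ) = 1)
    {α : Sd d → ℝ} {β : Td d → ℝ} (hα : ∀ S, 0 ≤ α S) (hβ : ∀ T, 0 ≤ β T)
    {γ : ℝ} (hγ : γ = ∑ S, α S + ∑ T, β T) (hγpos : 0 < γ)
    {Ω ι 𝓨 : Type*} [MeasurableSpace Ω] [Fintype ι] [MeasurableSpace 𝓨] {Pr : Measure Ω}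
    {ρ : Measure 𝓨} [IsProbabilityMeasure ρ] {θstar : Θ}
    {X : ι → Ω → (∀ i, π i)} {Y : Ω → 𝓨}
    (hXY : HasLaw (fun ω => (fun j => X j ω, Y ω))
      ((Measure.pi fun _ => (Measure.pi μ).withDensity (p θstar)).prod ρ) Pr)
    {t : 𝓨 → Θ} (ht : Measurable t) (a : ℝ≥0∞) :
    1 - a ≤ Pr {ω | safeDiv (∏ j, compLik μ α β γ (p (t (Y ω))) (X j ω))
      (∏ j, compLik μ α β γ (p θstar) (X j ω)) ≤ a⁻¹} := by
  have hp (θ : Θ) : Measurable (p θ) := hp_meas.of_uncurry_left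
  have : IsProbabilityMeasure ((Measure.pi μ).withDensity (p θstar)) :=
    isProbabilityMeasure_withDensity_of_lintegral_eq_one (hp_prob θstar)
  have hL := measurable_compLik_uncurry μ hp_meas α β γ
  exact one_sub_le_measure_safeDiv_prod_le_inv hXY (c := fun y => compLik μ α β γ (p (t y)))
    (hL.comp ((ht.comp measurable_fst).prodMk measurable_snd)) (hL.comp measurable_prodMk_left)
    (fun y => lintegral_safeDiv_compLik_le_one μ hα hβ hγ hγpos (hp (t y)) (hp θstar)
      (hp_prob (t y)).le (hp_prob θstar).le) a

/-- The split-statistic universal confidence set is finite-sample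
valid: for every `n ∈ ℕ` and every significance level `a ∈ (0,1)`,
`Pr_{θ*}(θ* ∈ C_n^a) ≥ 1 − a`, where `C_n^a = {θ ∈ Θ : U_{α,β,n}^0(θ) ≤ 1/a}`. -/
theorem split_confidence_set_valid
    {d : ℕ} (hd : 1 ≤ d)
    {π : Fin d → Type*} [∀ i, MeasurableSpace (π i)]
    (μ : ∀ i, Measure (π i)) [∀ i, SigmaFinite (μ i)]
    {Θ : Type*} [MeasurableSpace Θ]
    (p : Θ → (∀ i, π i) → ℝ≥0∞)
    (hp_meas : Measurable (Function.uncurry p))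
    (hp_prob : ∀ θ : Θ, ∫⁻ x, p θ x ∂(Measure.pi μ) = 1)
    (α : Sd d → ℝ) (β : Td d → ℝ)
    (hα : ∀ S, 0 ≤ α S) (hβ : ∀ T, 0 ≤ β T)
    (γ : ℝ) (hγ : γ = ∑ S, α S + ∑ T, β T) (hγpos : 0 < γ)
    {Ω : Type*} [MeasurableSpace Ω]
    (Pr : Measure Ω) [IsProbabilityMeasure Pr]
    (θstar : Θ) (n : ℕ)
    -- the two halves `X_n^0` and `X_n^1` of the i.i.d. sample of size `2n`
    (X0 X1 : Fin n → Ω → (∀ i, π i))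
    (hX0 : ∀ j, Measurable (X0 j)) (hX1 : ∀ j, Measurable (X1 j))
    -- the `2n` observations are i.i.d. with density `p(·;θ*)` w.r.t. `μ`
    (hlaw : Measure.map (fun ω => (fun j => X0 j ω, fun j => X1 j ω)) Pr
      = (Measure.pi fun _ : Fin n => (Measure.pi μ).withDensity (p θstar)).prod
          (Measure.pi fun _ : Fin n => (Measure.pi μ).withDensity (p θstar)))
    -- the estimators `θ̃_n^0`, `θ̃_n^1` are measurable functions of `X_n^0`, `X_n^1` alone
    (t0 t1 : (Fin n → ∀ i, π i) → Θ)
    (ht0 : Measurable t0) (ht1 : Measurable t1)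
    (a : ℝ) (ha0 : 0 < a) (ha1 : a < 1) :
    ENNReal.ofReal (1 - a) ≤
      Pr {ω | safeDiv
          (∏ j : Fin n, compLik μ α β γ (p (t1 fun j' => X1 j' ω)) (X0 j ω))
          (∏ j : Fin n, compLik μ α β γ (p θstar) (X0 j ω)) ≤ 1 / ENNReal.ofReal a} := by
  rw [ENNReal.ofReal_sub _ ha0.le, ENNReal.ofReal_one, one_div]
  have := isProbabilityMeasure_withDensity_of_lintegral_eq_one (hp_prob θstar)
  have hsample : HasLaw (fun ω => (fun j => X0 j ω, fun j => X1 j ω)) _ Pr := ⟨by fun_prop, hlaw⟩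
  exact split_confidence_set_valid_general μ hp_meas hp_prob hα hβ hγ hγpos hsample ht1 _
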